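/- Let $X$ be a nonempty set and $\overline{\mathbb R}=[-\infty,\infty]$, with the conventions $0\cdot\infty=0$ and $\infty+(-\infty)=\infty$. An outer probability content on $X$ is a functional $\mathcal E:\overline{\mathbb R}^X\to\overline{\mathbb R}$ such that, for all $f,g:X\to\overline{\mathbb R}$: (1) $\mathcal E(f)\le\mathcal E(g)$ if $f\le g$ pointwise; (2) $\mathcal E(cf)=c\,\mathcal E(f)$ for every real $c>0$; (3) $\mathcal E(f+g)\le\mathcal E(f)+\mathcal E(g)$; (4) $\mathcal E(c)=c$ for every real constant $c$. Fix outer probability contents $\mathcal E_1,\mathcal E_2,\dots$ on $X$. Let $\Omega=X^\infty$; a situation is a finite sequence $s\in X^*$, of length $|s|$; $\Gamma(s)\subseteq\Omega$ is the set of infinite sequences extending $s$; and $\omega^n$ is the prefix of length $n$ of $\omega\in\Omega$. A supermartingale is a function $S:X^*\to\overline{\mathbb R}$ such that $\mathcal E_n(x\mapsto S(tx))\le S(t)$ for every $n\ge1$ and every situation $t$ of length $n-1$. For $E\subseteq\Omega$ and a situation $s$, the conditional upper probability is $$\overline{\mathbb P}(E\mid s):=\inf\Bigl\{S(s): S\text{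 a bounded below supermartingale with }\liminf_{n\to\infty}S(\omega^n)\ge \mathbf 1_E(\omega)\text{ for all }\omega\in\Gamma(s)\Bigr\}.$$ Then, for every event $E\subseteq\Omega$ and every situation $s$, $$\overline{\mathbb P}(E\mid s)=\inf\Bigl\{S(s): S\text{ a nonnegative supermartingale with }\sup_{n\ge|s|}S(\omega^n)\ge1\text{ for all }\omega\in E\cap\Gamma(s)\Bigr\},$$ and the same value is obtained when $\sup_{n\ge|s|}$ is replaced by $\limsup_{n\to\infty}$ or by $\liminf_{n\to\infty}$. -/

import Mathlib

open Filter

namespace GTP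

noncomputable section

open Classical in
/-- Addition on `[-∞, ∞]` with the convention `∞ + (-∞) = (-∞) + ∞ = ∞`.
(Addition in Mathlib's `EReal` has the opposite convention `⊤ + ⊥ = ⊥`.) -/
def upAdd (a b : EReal) : EReal := if a = ⊤ ∨ b = ⊤ then ⊤ else a + b

/-- An *outer probability content* on `Y`: a functional on all `[-∞, ∞]`-valued functions
that is monotone, positively homogeneous, subadditive (with `∞ + (-∞) = ∞`), and maps
real constants to themselves. -/
structure IsOPC {Y : Type*} (E : (Y → EReal) → EReal) : Prop where
  mono : ∀ f g : Y → EReal, (∀ y, f y ≤ g y) → E f ≤ E g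
  smul : ∀ (c : ℝ), 0 < c → ∀ f : Y → EReal,
    E (fun y => (c : EReal) * f y) = (c : EReal) * E f
  add_le : ∀ f g : Y → EReal, E (fun y => upAdd (f y) (g y)) ≤ upAdd (E f) (E g)
  const : ∀ c : ℝ, E (fun _ => (c : EReal)) = (c : EReal)

/-- The length-`n` prefix `ω^n` of a sequence `ω ∈ Ω = X^∞`. -/
def pre {X : Type*} (ω : ℕ → X) (n : ℕ) : List X := List.ofFn fun i : Fin n => ω i

/-- `Γ(s)`: the set of infinite extensions of the situation `s`. -/
def Gamma {X : Type*} (s : List X) : Set (ℕ → X) := {ω | pre ω s.length = s}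

/-- A *supermartingale* with respect to the outer probability contents `E 0, E 1, …`;
`E n` governs the trial that is played in situations of length `n`, so `E n` is
`E_{n+1}` in the numbering of trials that starts at `1`. -/
def IsSupermartingale {X : Type*} (E : ℕ → (X → EReal) → EReal) (S : List X → EReal) : Prop :=
  ∀ s : List X, E s.length (fun x => S (s ++ [x])) ≤ S s

/-- A function to `[-∞, ∞]` that is bounded below by a real constant. -/
def BddBelowFn {Y : Type*} (S : Y → EReal) : Prop := ∃ c : ℝ, ∀ t, (c : EReal) ≤ S t

/-- The conditional upper expectation `Ē(ξ | s)`. -/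
def upExp {X : Type*} (E : ℕ → (X → EReal) → EReal) (ξ : (ℕ → X) → EReal) (s : List X) :
    EReal :=
  sInf {a | ∃ S : List X → EReal, IsSupermartingale E S ∧ BddBelowFn S ∧
    (∀ ω ∈ Gamma s, ξ ω ≤ liminf (fun n => S (pre ω n)) atTop) ∧ S s = a}

/-- The indicator function of an event, with values in `EReal`. -/
def ind {X : Type*} (A : Set (ℕ → X)) : (ℕ → X) → EReal := A.indicator fun _ => 1

/-- The conditional upper probability `P̄(A | s)`. -/
def upProb {X : Type*} (E : ℕ → (X → EReal) → EReal) (A : Set (ℕ → X)) (s : List X) : EReal :=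
  upExp E (ind A) s

end

end GTP

/-!
To bound `P̄(A|s)` by the infima, stop a nonnegative supermartingale when it first reaches a level
`b < 1` at or after `s`: on `A ∩ Γ(s)` the stopped process is eventually the constant `b`, so after
division by `b` its lower limit dominates the indicator of `A`, and `b → 1` gives Ville's
inequality. Conversely, a supermartingale that is `< r` in some situation is `< r` in one of its
children, hence along a whole path. So a supermartingale whose lower limits on `Γ(s)` dominate the
indicator of `A` is nonnegative from `s` onwards, and its values elsewhere may be raised to `⊤`.
-/

namespace GTP

open scoped Topology

variable {X : Type*} {E : ℕ → (X → EReal) → EReal} {S : List X → EReal} {A : Set (ℕ → X)}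
  {s t u : List X} {ω : ℕ → X}

theorem limsup_le_iSup_ge {α : Type*} [CompleteLattice α] (f : ℕ → α) (m : ℕ) :
    limsup f atTop ≤ ⨆ n ≥ m, f n :=
  limsup_eq_iInf_iSup_of_nat.trans_le (iInf_le _ m)

theorem length_pre (ω : ℕ → X) (n : ℕ) : (pre ω n).length = n :=
  List.length_ofFn

theorem pre_succ (ω : ℕ → X) (n : ℕ) : pre ω (n + 1) = pre ω n ++ [ω n] :=
  List.ofFn_succ_last

theorem pre_prefix_pre (ω : ℕ → X) {m n : ℕ} (h : m ≤ n) : pre ω m <+: pre ω n := by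
  induction n, h using Nat.le_induction with
  | base => exact List.prefix_rfl
  | succ n _ ih => exact ih.trans (pre_succ ω n ▸ List.prefix_append _ _)

theorem mem_Gamma_iff_prefix_pre {n : ℕ} (h : s.length ≤ n) : ω ∈ Gamma s ↔ s <+: pre ω n where
  mp hω := by
    have hpre := pre_prefix_pre ω h
    rwa [show pre ω s.length = s from hω] at hpre
  mpr hs :=
    (List.prefix_of_prefix_length_le (pre_prefix_pre ω h) hs (length_pre ω _).le).eq_of_length
      (length_pre ω _)

theorem Gamma_subset_Gamma_of_prefix (h : s <+: t) : Gamma t ⊆ Gamma s := fun _ hω =>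
  (mem_Gamma_iff_prefix_pre h.length_le).2 (h.trans ((mem_Gamma_iff_prefix_pre le_rfl).1 hω))

theorem exists_pre_length_add_eq_iterate (g : List X → X) (t : List X) :
    ∃ ω : ℕ → X, ∀ n, pre ω (t.length + n) = (fun u => u ++ [g u])^[n] t := by
  refine ⟨fun k => if h : k < t.length then t[k]
    else g ((fun u => u ++ [g u])^[k - t.length] t), fun n => ?_⟩
  induction n with
  | zero => simp [pre]
  | succ n ih =>
    rw [← Nat.add_assoc, pre_succ, ih, Function.iterate_succ_apply']
    simp

theorem exists_mem_Gamma_forall_pre {p : List X → Prop}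
    (hp : ∀ u, p u → ∃ x, p (u ++ [x])) (ht : p t) :
    ∃ ω ∈ Gamma t, ∀ n ≥ t.length, p (pre ω n) := by
  have : Nonempty X := (hp t ht).nonempty
  choose! g hg using hp
  obtain ⟨ω, hω⟩ := exists_pre_length_add_eq_iterate g t
  refine ⟨ω, hω 0, fun n hn => ?_⟩
  obtain ⟨k, rfl⟩ := Nat.exists_eq_add_of_le hn
  exact hω k ▸ Function.Iterate.rec p ht hg k

theorem IsSupermartingale.exists_concat_lt (hE : ∀ n, IsOPC (E n)) (hS : IsSupermartingale E S)
    {c : EReal} (hu : S u < c) : ∃ x, S (u ++ [x]) < c := by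
  obtain ⟨r, hur, hrc⟩ := EReal.lt_iff_exists_real_btwn.1 hu
  by_contra! hc
  refine hur.not_ge ?_
  calc (r : EReal) = E u.length fun _ => (r : EReal) := ((hE _).const r).symm
    _ ≤ E u.length fun x => S (u ++ [x]) := (hE _).mono _ _ fun x => hrc.le.trans (hc x)
    _ ≤ S u := hS u

theorem IsSupermartingale.le_of_forall_le_limsup (hE : ∀ n, IsOPC (E n))
    (hS : IsSupermartingale E S) {c : EReal}
    (h : ∀ ω ∈ Gamma t, c ≤ limsup (fun n => S (pre ω n)) atTop) : c ≤ S t := by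
  by_contra! hlt
  obtain ⟨r, htr, hrc⟩ := exists_between hlt
  obtain ⟨ω, hω, hlow⟩ := exists_mem_Gamma_forall_pre (p := fun u => S u < r)
    (fun _ => hS.exists_concat_lt hE) htr
  have hlimsup : limsup (fun n => S (pre ω n)) atTop ≤ r := by
    refine limsup_le_of_le (h := ?_)
    filter_upwards [eventually_ge_atTop t.length] with n hn using (hlow n hn).le
  exact ((h ω hω).trans hlimsup).not_gt hrc

theorem IsSupermartingale.const_mul (hE : ∀ n, IsOPC (E n)) (hS : IsSupermartingale E S)
    {c : ℝ} (hc : 0 < c) : IsSupermartingale E fun t => (c : EReal) * S t := fun t =>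
  ((hE t.length).smul c hc _).trans_le
    (mul_le_mul_of_nonneg_left (hS t) (EReal.coe_nonneg.2 hc.le))

open Classical in
/-- The process that agrees with `S` at the situations extending `s` and is `⊤` elsewhere. It
discards what `S` does off `Γ(s)`; the value `⊤` keeps the supermartingale property. -/
noncomputable def restrictFrom (s : List X) (S : List X → EReal) (t : List X) : EReal :=
  if s <+: t then S t else ⊤

theorem restrictFrom_of_prefix (h : s <+: t) : restrictFrom s S t = S t :=
  if_pos h

theorem restrictFrom_nonneg (h : ∀ t, s <+: t → 0 ≤ S t) (t : List X) :
    0 ≤ restrictFrom s S t := by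
  unfold restrictFrom
  split_ifs with ht
  exacts [h t ht, le_top]

theorem isSupermartingale_restrictFrom (hS : IsSupermartingale E S) (s : List X) :
    IsSupermartingale E (restrictFrom s S) := by
  intro t
  by_cases h : s <+: t
  · simpa only [restrictFrom_of_prefix h,
      restrictFrom_of_prefix (h.trans (List.prefix_append t _))] using hS t
  · exact le_top.trans_eq (if_neg h).symm

theorem liminf_restrictFrom_pre (hω : ω ∈ Gamma s) :
    liminf (fun n => restrictFrom s S (pre ω n)) atTop = liminf (fun n => S (pre ω n)) atTop := by
  refine liminf_congr ?_
  filter_upwards [eventually_ge_atTop s.length] with n hn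
  exact restrictFrom_of_prefix ((mem_Gamma_iff_prefix_pre hn).1 hω)

open Classical in
/-- The process `S` stopped when it first reaches the level `c` at or after `s`. The value after
stopping is `c` itself, not the possibly larger value of `S` at that moment. -/
noncomputable def stopAt (s : List X) (c : EReal) (S : List X → EReal) (t : List X) : EReal :=
  if ∃ u, s <+: u ∧ u <+: t ∧ c ≤ S u then c else S t

section stopAt

variable {c : EReal}

theorem stopAt_eq_of_le (hsu : s <+: u) (hut : u <+: t) (hu : c ≤ S u) : stopAt s c S t = c :=
  if_pos ⟨u, hsu, hut, hu⟩

theorem stopAt_le (h : ∀ u, s <+: u → u <+: t → c ≤ S u → u = t) : stopAt s c S t ≤ S t := by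
  unfold stopAt
  split_ifs with hreach
  · obtain ⟨u, hsu, hut, hu⟩ := hreach
    exact h u hsu hut hu ▸ hu
  · exact le_rfl

theorem stopAt_self_le (s : List X) (c : EReal) (S : List X → EReal) : stopAt s c S s ≤ S s :=
  stopAt_le fun _ hsu hus _ => hus.eq_of_length_le hsu.length_le

theorem le_stopAt {b : EReal} (hbc : b ≤ c) (hbS : b ≤ S t) : b ≤ stopAt s c S t := by
  unfold stopAt
  split_ifs
  exacts [hbc, hbS]

end stopAt

theorem isSupermartingale_stopAt (hE : ∀ n, IsOPC (E n)) (hS : IsSupermartingale E S)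
    (s : List X) (c : ℝ) : IsSupermartingale E (stopAt s c S) := by
  intro t
  by_cases ht : ∃ u, s <+: u ∧ u <+: t ∧ (c : EReal) ≤ S u
  · obtain ⟨u, hsu, hut, hu⟩ := ht
    simp only [stopAt_eq_of_le hsu hut hu,
      stopAt_eq_of_le hsu (hut.trans (List.prefix_append t _)) hu]
    exact ((hE t.length).const c).le
  · rw [show stopAt s c S t = S t from if_neg ht]
    refine ((hE t.length).mono _ _ fun x => ?_).trans (hS t)
    refine stopAt_le fun u hsu hut hu => ?_
    exact (List.prefix_concat_iff.1 hut).resolve_right fun hut' => ht ⟨u, hsu, hut', hu⟩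

theorem upProb_le_of_one_le_liminf (hS : IsSupermartingale E S) (hS0 : ∀ t, 0 ≤ S t)
    (hA : ∀ ω ∈ A ∩ Gamma s, 1 ≤ liminf (fun n => S (pre ω n)) atTop) : upProb E A s ≤ S s := by
  refine sInf_le ⟨S, hS, ⟨0, hS0⟩, fun ω hω => ?_, rfl⟩
  exact Set.indicator_apply_le' (fun hωA => hA ω ⟨hωA, hω⟩)
    fun _ => le_liminf_of_le (h := .of_forall fun n => hS0 _)

theorem upProb_le_inv_mul_of_exists_le (hE : ∀ n, IsOPC (E n)) (hS : IsSupermartingale E S)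
    (hS0 : ∀ t, 0 ≤ S t) {c : ℝ} (hc : 0 < c)
    (hA : ∀ ω ∈ A ∩ Gamma s, ∃ n ≥ s.length, (c : EReal) ≤ S (pre ω n)) :
    upProb E A s ≤ (c⁻¹ : ℝ) * S s := by
  have hinv : (0 : EReal) ≤ (c⁻¹ : ℝ) := EReal.coe_nonneg.2 (inv_nonneg.2 hc.le)
  refine le_trans ?_ (mul_le_mul_of_nonneg_left (stopAt_self_le s c S) hinv)
  refine upProb_le_of_one_le_liminf
    ((isSupermartingale_stopAt hE hS s c).const_mul hE (inv_pos.2 hc))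
    (fun t => mul_nonneg hinv (le_stopAt (EReal.coe_nonneg.2 hc.le) (hS0 t))) fun ω hω => ?_
  obtain ⟨m, hm, hcm⟩ := hA ω hω
  refine le_liminf_of_le (h := ?_)
  filter_upwards [eventually_ge_atTop m] with n hn
  rw [stopAt_eq_of_le ((mem_Gamma_iff_prefix_pre hm).1 hω.2) (pre_prefix_pre ω hn) hcm,
    ← EReal.coe_mul, inv_mul_cancel₀ hc.ne', EReal.coe_one]

/-- Ville's inequality. -/
theorem upProb_le_inv_mul_of_le_iSup (hE : ∀ n, IsOPC (E n)) (hS : IsSupermartingale E S)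
    (hS0 : ∀ t, 0 ≤ S t) {c : ℝ} (hc : 0 < c)
    (hA : ∀ ω ∈ A ∩ Gamma s, (c : EReal) ≤ ⨆ n ≥ s.length, S (pre ω n)) :
    upProb E A s ≤ (c⁻¹ : ℝ) * S s := by
  have hlim : Tendsto (fun b : ℝ => ((b⁻¹ : ℝ) : EReal) * S s) (𝓝[<] c)
      (𝓝 ((c⁻¹ : ℝ) * S s)) := by
    have hinv : ((c⁻¹ : ℝ) : EReal) ≠ 0 := EReal.coe_ne_zero.2 (inv_ne_zero hc.ne')
    have hcoe : Tendsto (fun b : ℝ => ((b⁻¹ : ℝ) : EReal)) (𝓝[<] c) (𝓝 (c⁻¹ : ℝ)) :=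
      EReal.tendsto_coe.2 ((tendsto_inv₀ hc.ne').mono_left nhdsWithin_le_nhds)
    exact EReal.Tendsto.mul hcoe tendsto_const_nhds (.inl hinv) (.inl hinv)
      (.inl (EReal.coe_ne_bot _)) (.inl (EReal.coe_ne_top _))
  refine ge_of_tendsto hlim ?_
  filter_upwards [Ioo_mem_nhdsLT hc] with b hb
  refine upProb_le_inv_mul_of_exists_le hE hS hS0 hb.1 fun ω hω => ?_
  have hlt : (b : EReal) < ⨆ n ≥ s.length, S (pre ω n) :=
    (EReal.coe_lt_coe_iff.2 hb.2).trans_le (hA ω hω)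
  obtain ⟨n, hn, hbn⟩ := lt_biSup_iff.1 hlt
  exact ⟨n, hn, hbn.le⟩

theorem exists_nonneg_isSupermartingale_of_ind_le_liminf (hE : ∀ n, IsOPC (E n))
    (hS : IsSupermartingale E S)
    (hA : ∀ ω ∈ Gamma s, ind A ω ≤ liminf (fun n => S (pre ω n)) atTop) :
    ∃ T : List X → EReal, IsSupermartingale E T ∧ (∀ t, 0 ≤ T t) ∧
      (∀ ω ∈ A ∩ Gamma s, 1 ≤ liminf (fun n => T (pre ω n)) atTop) ∧ T s = S s := by
  have hS0 : ∀ t, s <+: t → 0 ≤ S t := fun t hst =>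
    hS.le_of_forall_le_limsup hE fun ω hω => calc
      0 ≤ ind A ω := Set.indicator_nonneg (fun _ _ => zero_le_one) ω
      _ ≤ liminf (fun n => S (pre ω n)) atTop := hA ω (Gamma_subset_Gamma_of_prefix hst hω)
      _ ≤ limsup (fun n => S (pre ω n)) atTop := liminf_le_limsup
  refine ⟨restrictFrom s S, isSupermartingale_restrictFrom hS s, restrictFrom_nonneg hS0,
    fun ω hω => ?_, restrictFrom_of_prefix List.prefix_rfl⟩
  calc (1 : EReal) = ind A ω := (Set.indicator_of_mem hω.1 fun _ => 1).symm
    _ ≤ liminf (fun n => S (pre ω n)) atTop := hA ω hω.2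
    _ = liminf (fun n => restrictFrom s S (pre ω n)) atTop := (liminf_restrictFrom_pre hω.2).symm

theorem upProb_eq_sInf_nonneg_of_liminf_le_of_le_iSup (hE : ∀ n, IsOPC (E n))
    (A : Set (ℕ → X)) (s : List X) (L : (ℕ → EReal) → EReal)
    (hL_liminf : ∀ f, liminf f atTop ≤ L f) (hL_iSup : ∀ f, L f ≤ ⨆ n ≥ s.length, f n) :
    upProb E A s =
      sInf {a | ∃ S : List X → EReal, IsSupermartingale E S ∧ (∀ t, 0 ≤ S t) ∧
        (∀ ω ∈ A ∩ Gamma s, 1 ≤ L fun n => S (pre ω n)) ∧ S s = a} := by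
  apply le_antisymm
  · refine le_sInf ?_
    rintro _ ⟨S, hS, hS0, hA, rfl⟩
    simpa using upProb_le_inv_mul_of_le_iSup hE hS hS0 one_pos
      fun ω hω => (hA ω hω).trans (hL_iSup _)
  · refine le_sInf ?_
    rintro _ ⟨S, hS, -, hA, rfl⟩
    obtain ⟨T, hT, hT0, hTA, hTs⟩ := exists_nonneg_isSupermartingale_of_ind_le_liminf hE hS hA
    exact sInf_le ⟨T, hT, hT0, fun ω hω => (hTA ω hω).trans (hL_liminf _), hTs⟩

end GTP

/-- `P̄(A|s)` is the infimum of `S(s)` over the nonnegative supermartingales `S` with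
`sup_{n ≥ |s|} S(ω^n) ≥ 1` for all `ω ∈ A ∩ Γ(s)`; the same value is obtained with
`limsup` or `liminf` in place of the supremum. -/
theorem upProb_eq_inf_nonneg {X : Type*} [Nonempty X]
    (E : ℕ → (X → EReal) → EReal) (hE : ∀ n, GTP.IsOPC (E n))
    (A : Set (ℕ → X)) (s : List X) :
    GTP.upProb E A s =
      sInf {a | ∃ S : List X → EReal, GTP.IsSupermartingale E S ∧ (∀ t, 0 ≤ S t) ∧
        (∀ ω ∈ A ∩ GTP.Gamma s, (1 : EReal) ≤ ⨆ n ≥ s.length, S (GTP.pre ω n)) ∧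
        S s = a} ∧
    GTP.upProb E A s =
      sInf {a | ∃ S : List X → EReal, GTP.IsSupermartingale E S ∧ (∀ t, 0 ≤ S t) ∧
        (∀ ω ∈ A ∩ GTP.Gamma s,
          (1 : EReal) ≤ limsup (fun n => S (GTP.pre ω n)) atTop) ∧
        S s = a} ∧
    GTP.upProb E A s =
      sInf {a | ∃ S : List X → EReal, GTP.IsSupermartingale E S ∧ (∀ t, 0 ≤ S t) ∧
        (∀ ω ∈ A ∩ GTP.Gamma s,
          (1 : EReal) ≤ liminf (fun n => S (GTP.pre ω n)) atTop) ∧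
        S s = a} := by
  have limsup_le_iSup (f : ℕ → EReal) := GTP.limsup_le_iSup_ge f s.length
  have liminf_le_limsup (f : ℕ → EReal) : liminf f atTop ≤ limsup f atTop := Filter.liminf_le_limsup
  have liminf_le_iSup (f : ℕ → EReal) := (liminf_le_limsup f).trans (limsup_le_iSup f)
  have upProb_eq := GTP.upProb_eq_sInf_nonneg_of_liminf_le_of_le_iSup hE A s
  exact ⟨upProb_eq (fun f => ⨆ n ≥ s.length, f n) liminf_le_iSup fun _ => le_rfl,
    upProb_eq (fun f => limsup f atTop) liminf_le_limsup limsup_le_iSup,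
    upProb_eq (fun f => liminf f atTop) (fun _ => le_rfl) liminf_le_iSup⟩
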